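/- (Theorem A, Real Nullstellensatz) For any polynomials p₁, …, p_m, q ∈ ℝ[x₁, …, x_d] the following are equivalent: (1) for every point a ∈ ℝ^d such that p₁(a) = ⋯ = p_m(a) = 0 one has q(a) = 0; (2) q belongs to every real ideal of ℝ[x₁, …, x_d] that contains p₁, …, p_m (equivalently, q belongs to the smallest real ideal containing p₁, …, p_m). -/

import Mathlib

open MvPolynomial

/-- An ideal `I` of a commutative ring `R` is *real* if whenever a finite sum of squares
`a 0 ^ 2 + ⋯ + a (k-1) ^ 2` lies in `I`, each `a i` lies in `I`. -/
def Ideal.IsRealIdeal {R : Type*} [CommRing R] (I : Ideal R) : Prop :=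
  ∀ (k : ℕ) (a : Fin k → R), (∑ i, a i ^ 2) ∈ I → ∀ i, a i ∈ I

/-! Let `I` be a real ideal with `q ∉ I`. An ideal `P` which is maximal among the real ideals that
contain `I` but not `q` is prime, and the domain `K[x] ⧸ P` embeds into a real closed field `F`. The
images of the variables are a point of `F` at which `P` vanishes and `q` does not. As `P` is
finitely generated, it remains to move the signs of finitely many polynomials from a point over `F`
to a point over `K`.

In one variable, extend the ring of coefficients, by Zorn's lemma, to a maximal common ordered
subfield `E` of the two real closed fields. It contains every root, in either field, of a polynomial
over `E`: a missing root of a polynomial of least degree lies in an interval between roots of the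
derivative, on which the polynomial is strictly monotone, so that its sign change in one field
forces a root in the other, with the same position relative to `E`. Hence the sign of a polynomial
over `E` at a point depends only on the position of the point relative to finitely many elements of
`E`, and every such position is realised by density of the order.

For the induction on the number of variables, the values found for the first variable and all finite
sets of polynomials are combined into one element of an ultrapower of the target field, which takes
the right signs on all polynomials at once; the ultrapower is again real closed, and an existence
statement in it holds at some coordinate. -/

namespace RealNullstellensatz

open Filter Set SignType
open scoped Polynomial

universe u v

/-- The intermediate value theorem for polynomials. An ordered field satisfies it if and only if it
is real closed (`IsRealClosed`); in this form the property passes to ultrapowers at once. -/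
class PolynomialIVP (K : Type*) [Field K] [LinearOrder K] : Prop where
  exists_isRoot {f : K[X]} {a b : K} (hab : a < b) (hf : f.eval a * f.eval b < 0) :
    ∃ c ∈ Ioo a b, f.IsRoot c

instance : PolynomialIVP ℝ where
  exists_isRoot {f a b} hab hf := by
    rcases mul_neg_iff.mp hf with ⟨ha, hb⟩ | ⟨ha, hb⟩
    · exact intermediate_value_Ioo' hab.le f.continuousOn ⟨hb, ha⟩
    · exact intermediate_value_Ioo hab.le f.continuousOn ⟨ha, hb⟩

section PolynomialIVP

variable {K : Type*} [Field K] [LinearOrder K] [IsStrictOrderedRing K] [PolynomialIVP K]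
  {f : K[X]} {a b : K}

theorem sign_eval_eq_of_forall_not_isRoot (h : ∀ c ∈ uIcc a b, ¬ f.IsRoot c) :
    sign (f.eval a) = sign (f.eval b) := by
  wlog hab : a ≤ b generalizing a b
  · exact (this (by rwa [uIcc_comm]) (le_of_not_ge hab)).symm
  rcases hab.eq_or_lt with rfl | hab'
  · rfl
  rw [uIcc_of_le hab] at h
  have ha : f.eval a ≠ 0 := h a (left_mem_Icc.mpr hab)
  have hb : f.eval b ≠ 0 := h b (right_mem_Icc.mpr hab)
  have hpos : ¬ f.eval a * f.eval b < 0 := fun hneg ↦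
    have ⟨c, hc, hfc⟩ := PolynomialIVP.exists_isRoot hab' hneg
    h c (Ioo_subset_Icc_self hc) hfc
  rcases mul_pos_iff.mp ((mul_ne_zero ha hb).lt_of_le' (not_lt.mp hpos)) with ⟨h₁, h₂⟩ | ⟨h₁, h₂⟩
  · rw [sign_pos h₁, sign_pos h₂]
  · rw [sign_neg h₁, sign_neg h₂]

theorem mul_eval_pos_of_forall_not_isRoot (hab : a ≤ b) (h : ∀ c ∈ Icc a b, ¬ f.IsRoot c) :
    0 < f.eval a * f.eval b := by
  have hsign := sign_eval_eq_of_forall_not_isRoot (by rwa [uIcc_of_le hab])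
  rw [← sign_eq_one_iff, sign_mul, hsign, ← sign_mul]
  exact sign_pos (mul_self_pos.mpr (h b (right_mem_Icc.mpr hab)))

theorem exists_eq_X_sub_C_pow_succ_mul {F : Type*} [Field F] {f : F[X]} (hf : f ≠ 0) {a : F}
    (ha : f.IsRoot a) :
    ∃ (n : ℕ) (g : F[X]), f = (Polynomial.X - Polynomial.C a) ^ (n + 1) * g ∧ ¬ g.IsRoot a := by
  obtain ⟨g, hg, hga⟩ := f.exists_eq_pow_rootMultiplicity_mul_and_not_dvd hf a
  obtain ⟨n, hn⟩ := Nat.exists_eq_add_one.mpr ((Polynomial.rootMultiplicity_pos hf).mpr ha)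
  exact ⟨n, g, hn ▸ hg, mt Polynomial.dvd_iff_isRoot.mpr hga⟩

theorem exists_isRoot_derivative_of_consecutive_roots (hf : f ≠ 0) (hab : a < b) (ha : f.IsRoot a)
    (hb : f.IsRoot b) (h : ∀ c ∈ Ioo a b, ¬ f.IsRoot c) :
    ∃ c ∈ Ioo a b, f.derivative.IsRoot c := by
  obtain ⟨m, g, rfl, hga⟩ := exists_eq_X_sub_C_pow_succ_mul hf ha
  have hgb : g.IsRoot b := by
    simpa [sub_ne_zero.mpr hab.ne'] using hb
  obtain ⟨n, k, rfl, hkb⟩ := exists_eq_X_sub_C_pow_succ_mul (right_ne_zero_of_mul hf) hgb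
  have hk : ∀ c ∈ Icc a b, ¬ k.IsRoot c := by
    intro c hc hkc
    rcases eq_endpoints_or_mem_Ioo_of_mem_Icc hc with rfl | rfl | hc
    · exact hga (by simp [hkc.eq_zero])
    · exact hkb hkc
    · exact h c hc (by simp [hkc.eq_zero])
  have hkpos := mul_eval_pos_of_forall_not_isRoot hab.le hk
  -- The cofactor of `(X - a) ^ m * (X - b) ^ n` in the derivative changes sign on `[a, b]`.
  let w : K[X] := Polynomial.C (m + 1 : K) * (Polynomial.X - Polynomial.C b) * k
    + Polynomial.C (n + 1 : K) * (Polynomial.X - Polynomial.C a) * k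
    + (Polynomial.X - Polynomial.C a) * (Polynomial.X - Polynomial.C b) * k.derivative
  have hw : w.eval a * w.eval b < 0 := by
    have : w.eval a * w.eval b =
        -((m + 1) * (n + 1) * (b - a) ^ 2 * (k.eval a * k.eval b)) := by
      simp only [w, Polynomial.eval_add, Polynomial.eval_mul, Polynomial.eval_sub,
        Polynomial.eval_X, Polynomial.eval_C]
      ring
    rw [this, neg_lt_zero]
    have : 0 < b - a := sub_pos.mpr hab
    positivity
  obtain ⟨c, hc, hwc⟩ := PolynomialIVP.exists_isRoot hab hw
  refine ⟨c, hc, ?_⟩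
  have hderiv : Polynomial.derivative ((Polynomial.X - Polynomial.C a) ^ (m + 1) *
      ((Polynomial.X - Polynomial.C b) ^ (n + 1) * k)) =
      (Polynomial.X - Polynomial.C a) ^ m * (Polynomial.X - Polynomial.C b) ^ n * w := by
    simp only [w, Polynomial.derivative_mul, Polynomial.derivative_X_sub_C_pow,
      Nat.add_sub_cancel, Nat.cast_add, Nat.cast_one, map_add, map_natCast, map_one]
    ring
  rw [hderiv]
  exact Polynomial.root_mul_left_of_isRoot _ hwc

theorem exists_isRoot_derivative (hab : a < b) (ha : f.IsRoot a) (hb : f.IsRoot b) :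
    ∃ c ∈ Ioo a b, f.derivative.IsRoot c := by
  rcases eq_or_ne f 0 with rfl | hf
  · obtain ⟨c, hc⟩ := exists_between hab
    exact ⟨c, hc, by simp⟩
  let T := f.roots.toFinset.filter (a < ·)
  have hT {c : K} : c ∈ T ↔ f.IsRoot c ∧ a < c := by simp [T, hf]
  obtain ⟨b', hb'T, hb'⟩ := T.exists_minimal ⟨b, hT.mpr ⟨hb, hab⟩⟩
  obtain ⟨c, hc, hfc⟩ := exists_isRoot_derivative_of_consecutive_roots hf (hT.mp hb'T).2 ha
    (hT.mp hb'T).1 fun c hc hfc ↦ hc.2.not_ge (hb' (hT.mpr ⟨hfc, hc.1⟩) hc.2.le)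
  have hb'b : b' ≤ b := le_of_not_gt fun h ↦ h.not_ge (hb' (hT.mpr ⟨hb, hab⟩) h.le)
  exact ⟨c, ⟨hc.1, hc.2.trans_le hb'b⟩, hfc⟩

theorem exists_eval_sub_eval_eq_derivative_mul (f : K[X]) (hab : a < b) :
    ∃ c ∈ Ioo a b, f.eval b - f.eval a = f.derivative.eval c * (b - a) := by
  let s := (f.eval b - f.eval a) / (b - a)
  have hs : s * (b - a) = f.eval b - f.eval a := div_mul_cancel₀ _ (sub_pos.mpr hab).ne'
  let g : K[X] := f - Polynomial.C (f.eval a) - Polynomial.C s * (Polynomial.X - Polynomial.C a)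
  obtain ⟨c, hc, hgc⟩ := exists_isRoot_derivative (f := g) hab (by simp [g]) (by simp [g, hs])
  refine ⟨c, hc, ?_⟩
  have : f.derivative.eval c - s = 0 := by simpa [g] using hgc
  rw [sub_eq_zero.mp this, hs]

theorem strictMonoOn_eval_of_derivative_pos (h : ∀ c ∈ Ioo a b, 0 < f.derivative.eval c) :
    StrictMonoOn (fun x ↦ f.eval x) (Icc a b) := by
  intro x hx y hy hxy
  obtain ⟨c, hc, hfc⟩ := exists_eval_sub_eval_eq_derivative_mul f hxy
  have hc' := h c ⟨hx.1.trans_lt hc.1, hc.2.trans_le hy.2⟩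
  exact sub_pos.mp (hfc ▸ mul_pos hc' (sub_pos.mpr hxy))

end PolynomialIVP

theorem abs_le_of_isRoot_of_monic {K : Type*} [Field K] [LinearOrder K] [IsStrictOrderedRing K]
    {f : K[X]} (hf : f.Monic) {x : K} (hx : f.IsRoot x) :
    |x| ≤ 1 + ∑ k ∈ Finset.range f.natDegree, |f.coeff k| := by
  by_contra! hlt
  have h₁ : 1 < |x| := lt_of_le_of_lt (by simpa using Finset.sum_nonneg fun _ _ ↦ abs_nonneg _) hlt
  obtain ⟨n, hn⟩ : ∃ n, f.natDegree = n + 1 := Nat.exists_eq_add_one.mpr <| by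
    by_contra! h
    simp [hf.natDegree_eq_zero.mp (by lia)] at hx
  have hsum : x ^ f.natDegree = -∑ k ∈ Finset.range f.natDegree, f.coeff k * x ^ k := by
    rw [eq_neg_iff_add_eq_zero, add_comm, ← hx.eq_zero, Polynomial.eval_eq_sum_range,
      Finset.sum_range_succ, hf.coeff_natDegree, one_mul]
  have hpow : |x| * |x| ^ n ≤ (∑ k ∈ Finset.range f.natDegree, |f.coeff k|) * |x| ^ n := by
    rw [← pow_succ', ← hn, ← abs_pow, hsum, abs_neg, Finset.sum_mul]
    refine (Finset.abs_sum_le_sum_abs _ _).trans (Finset.sum_le_sum fun k hk ↦ ?_)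
    rw [abs_mul, abs_pow]
    gcongr
    · exact h₁.le
    · exact Nat.le_of_lt_succ ((Finset.mem_range.mp hk).trans_eq hn)
  linarith [le_of_mul_le_mul_right hpow (by positivity)]

theorem exists_forall_root_abs_lt {E R : Type*} [Field E] [Field R] [LinearOrder R]
    [IsStrictOrderedRing R] (i : E →+* R) {f : E[X]} (hf : f ≠ 0) :
    ∃ M : E, ∀ x : R, f.eval₂ i x = 0 → |x| < i M := by
  have hmonic : (f * Polynomial.C f.leadingCoeff⁻¹).Monic :=
    Polynomial.monic_mul_leadingCoeff_inv hf
  set g := f * Polynomial.C f.leadingCoeff⁻¹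
  -- The absolute values of the coefficients need not come from `E`, but `|c| < 1 + c ^ 2` does.
  refine ⟨2 + ∑ k ∈ Finset.range g.natDegree, (1 + g.coeff k ^ 2), fun x hx ↦ ?_⟩
  have hroot : (g.map i).IsRoot x := by simp [g, ← Polynomial.eval₂_eq_eval_map, hx]
  have hbound := abs_le_of_isRoot_of_monic (hmonic.map i) hroot
  rw [Polynomial.natDegree_map] at hbound
  have hcoeff : ∑ k ∈ Finset.range g.natDegree, |(g.map i).coeff k| ≤
      ∑ k ∈ Finset.range g.natDegree, (1 + i (g.coeff k) ^ 2) :=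
    Finset.sum_le_sum fun k _ ↦ by
      rw [Polynomial.coeff_map]
      nlinarith [sq_abs (i (g.coeff k)), sq_nonneg (|i (g.coeff k)| - 1)]
  simp only [map_add, map_ofNat, map_sum, map_one, map_pow]
  linarith

/-- Two homomorphisms to ordered fields agree in sign if they induce the same (quasi-)ordering on
their common source. -/
def SignAgree {E R S : Type*} [CommRing E] [Field R] [LinearOrder R] [Field S] [LinearOrder S]
    (i : E →+* R) (j : E →+* S) : Prop :=
  ∀ e, sign (i e) = sign (j e)

/-- The roots of `f` in the extension given by `i` lie in the base. -/
def RootsMemRange {E R : Type*} [CommRing E] [CommRing R] (i : E →+* R) (f : E[X]) : Prop :=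
  ∀ x, f.eval₂ i x = 0 → x ∈ i.range

theorem eval₂_ne_zero_of_roots_eq_zero {E R : Type*} [Field E] [Field R] {i : E →+* R} {q : E[X]}
    (hq : q ≠ 0) (hroots : q.roots = 0) (hi : RootsMemRange i q) (x : R) : q.eval₂ i x ≠ 0 := by
  intro hx
  obtain ⟨e, rfl⟩ := hi x hx
  rw [Polynomial.eval₂_at_apply, map_eq_zero] at hx
  simpa [hroots] using (Polynomial.mem_roots hq).mpr hx

section SignAgree

variable {R S : Type*} [Field R] [LinearOrder R] [Field S] [LinearOrder S]

theorem SignAgree.symm {E : Type*} [CommRing E] {i : E →+* R} {j : E →+* S} (hij : SignAgree i j) :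
    SignAgree j i :=
  fun e ↦ (hij e).symm

theorem SignAgree.apply_eq_zero_iff {E : Type*} [CommRing E] {i : E →+* R} {j : E →+* S}
    (hij : SignAgree i j) (e : E) : i e = 0 ↔ j e = 0 := by
  rw [← sign_eq_zero_iff, hij, sign_eq_zero_iff]

variable [IsStrictOrderedRing R] [IsStrictOrderedRing S]

theorem SignAgree.lt_iff_lt {E : Type*} [CommRing E] {i : E →+* R} {j : E →+* S}
    (hij : SignAgree i j) {a b : E} : i a < i b ↔ j a < j b := by
  rw [← sub_pos, ← sub_pos (a := j b), ← map_sub, ← map_sub, ← sign_eq_one_iff, hij,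
    sign_eq_one_iff]

theorem SignAgree.le_iff_le {E : Type*} [CommRing E] {i : E →+* R} {j : E →+* S}
    (hij : SignAgree i j) {a b : E} : i a ≤ i b ↔ j a ≤ j b := by
  rw [← not_lt, hij.lt_iff_lt, not_lt]

theorem sign_eval₂_prod_X_sub_C_eq {E : Type*} [CommRing E] {i : E →+* R} {j : E →+* S}
    {x : R} {y : S} (s : Multiset E) (hcut : ∀ e ∈ s, sign (x - i e) = sign (y - j e)) :
    sign ((s.map fun e ↦ Polynomial.X - Polynomial.C e).prod.eval₂ i x) =
      sign ((s.map fun e ↦ Polynomial.X - Polynomial.C e).prod.eval₂ j y) := by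
  induction s using Multiset.induction_on with
  | empty => simp
  | cons e s ih =>
    have ⟨he, hs⟩ := Multiset.forall_mem_cons.mp hcut
    simp only [Multiset.map_cons, Multiset.prod_cons, Polynomial.eval₂_mul, sign_mul, ih hs,
      Polynomial.eval₂_sub, Polynomial.eval₂_X, Polynomial.eval₂_C, he]

variable [PolynomialIVP R] [PolynomialIVP S] {E : Type*} [Field E] {i : E →+* R} {j : E →+* S}

theorem SignAgree.sign_eval₂_eq (hij : SignAgree i j) {g : E[X]} (hg : g ≠ 0)
    (hi : RootsMemRange i g) (hj : RootsMemRange j g) {x : R} {y : S}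
    (hcut : ∀ e ∈ g.roots, sign (x - i e) = sign (y - j e)) :
    sign (g.eval₂ i x) = sign (g.eval₂ j y) := by
  obtain ⟨q, hq, -, hroots⟩ := g.exists_prod_multiset_X_sub_C_mul
  have hq0 : q ≠ 0 := by
    rintro rfl
    exact hg (by rw [← hq, mul_zero])
  have hqi := eval₂_ne_zero_of_roots_eq_zero hq0 hroots fun z hz ↦
    hi z (by rw [← hq, Polynomial.eval₂_mul, hz, mul_zero])
  have hqj := eval₂_ne_zero_of_roots_eq_zero hq0 hroots fun z hz ↦
    hj z (by rw [← hq, Polynomial.eval₂_mul, hz, mul_zero])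
  have hq_sign : sign (q.eval₂ i x) = sign (q.eval₂ j y) := by
    rw [Polynomial.eval₂_eq_eval_map, Polynomial.eval₂_eq_eval_map,
      sign_eval_eq_of_forall_not_isRoot (b := i 0)
        fun z _ ↦ by rw [Polynomial.IsRoot, Polynomial.eval_map]; exact hqi z,
      sign_eval_eq_of_forall_not_isRoot (b := j 0)
        fun z _ ↦ by rw [Polynomial.IsRoot, Polynomial.eval_map]; exact hqj z,
      Polynomial.eval_map_apply, Polynomial.eval_map_apply, hij]
  rw [← hq, Polynomial.eval₂_mul, Polynomial.eval₂_mul, sign_mul, sign_mul, hq_sign,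
    sign_eval₂_prod_X_sub_C_eq _ hcut]

end SignAgree

section AlgebraicStep

variable {R S : Type*} [Field R] [LinearOrder R] [IsStrictOrderedRing R]
  [Field S] [LinearOrder S] [IsStrictOrderedRing S] {E : Type*} [Field E] {i : E →+* R}
  {j : E →+* S}

theorem sign_sub_eq_of_strictMonoOn {K : Type*} [Field K] [LinearOrder K] [IsStrictOrderedRing K]
    {f : K → K} {s : Set K} (hf : StrictMonoOn f s) {x y : K} (hx : x ∈ s) (hy : y ∈ s) :
    sign (f x - f y) = sign (x - y) := by
  rcases lt_trichotomy x y with h | rfl | h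
  · rw [sign_neg (sub_neg.mpr h), sign_neg (sub_neg.mpr (hf hx hy h))]
  · simp
  · rw [sign_pos (sub_pos.mpr h), sign_pos (sub_pos.mpr (hf hy hx h))]

theorem exists_isolating_interval {M : E} {x : R} (hM : |x| < i M) (hx : x ∉ i.range)
    (T : Finset E) :
    ∃ b c : E, i b < x ∧ x < i c ∧ ∀ e ∈ T, i e ≤ i b ∨ i c ≤ i e := by
  classical
  obtain ⟨hM₁, hM₂⟩ := abs_lt.mp hM
  let U := insert M (insert (-M) T)
  obtain ⟨b, hb, hbmax⟩ := (U.filter (i · < x)).exists_max_image i ⟨-M, by simp [U, hM₁]⟩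
  obtain ⟨c, hc, hcmin⟩ := (U.filter (x < i ·)).exists_min_image i ⟨M, by simp [U, hM₂]⟩
  refine ⟨b, c, (Finset.mem_filter.mp hb).2, (Finset.mem_filter.mp hc).2, fun e he ↦ ?_⟩
  have heU : e ∈ U := by simp [U, he]
  rcases lt_trichotomy (i e) x with h | h | h
  · exact .inl (hbmax e (Finset.mem_filter.mpr ⟨heU, h⟩))
  · exact absurd ⟨e, h⟩ hx
  · exact .inr (hcmin e (Finset.mem_filter.mpr ⟨heU, h⟩))

theorem SignAgree.sign_sub_eq_of_mem_Ioo (hij : SignAgree i j) {b c e : E}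
    (he : i e ≤ i b ∨ i c ≤ i e) {x : R} {y : S} (hx : x ∈ Ioo (i b) (i c))
    (hy : y ∈ Ioo (j b) (j c)) : sign (x - i e) = sign (y - j e) := by
  rcases he with heb | hce
  · rw [sign_pos (sub_pos.mpr (heb.trans_lt hx.1)),
      sign_pos (sub_pos.mpr ((hij.le_iff_le.mp heb).trans_lt hy.1))]
  · rw [sign_neg (sub_neg.mpr (hx.2.trans_le hce)),
      sign_neg (sub_neg.mpr (hy.2.trans_le (hij.le_iff_le.mp hce)))]

variable [PolynomialIVP R] [PolynomialIVP S]

theorem strictMonoOn_eval₂_of_derivative_pos {f : E[X]} {b c : E}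
    (h : ∀ x ∈ Ioo (i b) (i c), 0 < f.derivative.eval₂ i x) :
    StrictMonoOn (f.eval₂ i) (Icc (i b) (i c)) := by
  have := strictMonoOn_eval_of_derivative_pos (f := f.map i) (a := i b) (b := i c) fun x hx ↦ by
    rw [Polynomial.derivative_map, Polynomial.eval_map]
    exact h x hx
  simpa only [Polynomial.eval_map] using this

theorem SignAgree.exists_root_same_cut_of_derivative_pos (hij : SignAgree i j) {f : E[X]} {b c : E}
    (hi : ∀ x ∈ Ioo (i b) (i c), 0 < f.derivative.eval₂ i x)
    (hj : ∀ y ∈ Ioo (j b) (j c), 0 < f.derivative.eval₂ j y) {x : R} (hx : x ∈ Ioo (i b) (i c))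
    (hfx : f.eval₂ i x = 0) :
    ∃ y, f.eval₂ j y = 0 ∧ ∀ e, sign (x - i e) = sign (y - j e) := by
  have hmono_i := strictMonoOn_eval₂_of_derivative_pos hi
  have hmono_j := strictMonoOn_eval₂_of_derivative_pos hj
  have hbc := hx.1.trans hx.2
  have hfb : f.eval₂ j (j b) < 0 := by
    have : f.eval₂ i (i b) < f.eval₂ i x :=
      hmono_i (left_mem_Icc.mpr hbc.le) (Ioo_subset_Icc_self hx) hx.1
    rw [hfx, Polynomial.eval₂_at_apply, ← map_zero i, hij.lt_iff_lt] at this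
    rwa [Polynomial.eval₂_at_apply, ← map_zero j]
  have hfc : 0 < f.eval₂ j (j c) := by
    have : f.eval₂ i x < f.eval₂ i (i c) :=
      hmono_i (Ioo_subset_Icc_self hx) (right_mem_Icc.mpr hbc.le) hx.2
    rw [hfx, Polynomial.eval₂_at_apply, ← map_zero i, hij.lt_iff_lt] at this
    rwa [Polynomial.eval₂_at_apply, ← map_zero j]
  obtain ⟨y, hy, hfy⟩ := PolynomialIVP.exists_isRoot (f := f.map j) (hij.lt_iff_lt.mp hbc)
    (by simpa only [Polynomial.eval_map] using mul_neg_of_neg_of_pos hfb hfc)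
  rw [Polynomial.IsRoot, Polynomial.eval_map] at hfy
  refine ⟨y, hfy, fun e ↦ ?_⟩
  by_cases he : i e ≤ i b ∨ i c ≤ i e
  · exact hij.sign_sub_eq_of_mem_Ioo he hx hy
  · -- The sign of `x - e` is that of `f x - f e = -f e`, which is known in `E`.
    obtain ⟨hbe, hec⟩ := not_or.mp he
    rw [← sign_sub_eq_of_strictMonoOn hmono_i (Ioo_subset_Icc_self hx)
        ⟨(not_le.mp hbe).le, (not_le.mp hec).le⟩,
      ← sign_sub_eq_of_strictMonoOn hmono_j (Ioo_subset_Icc_self hy)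
        ⟨hij.le_iff_le.mp (not_le.mp hbe).le, hij.le_iff_le.mp (not_le.mp hec).le⟩,
      hfx, hfy, Polynomial.eval₂_at_apply, Polynomial.eval₂_at_apply, zero_sub, zero_sub,
      ← map_neg, ← map_neg, hij]

theorem SignAgree.exists_root_same_cut_of_sign_derivative_eq (hij : SignAgree i j) {f : E[X]}
    {b c : E} (hsign : ∀ x ∈ Ioo (i b) (i c), ∀ y ∈ Ioo (j b) (j c),
      sign (f.derivative.eval₂ i x) = sign (f.derivative.eval₂ j y))
    {x : R} (hx : x ∈ Ioo (i b) (i c)) (hne : f.derivative.eval₂ i x ≠ 0) (hfx : f.eval₂ i x = 0) :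
    ∃ y, f.eval₂ j y = 0 ∧ ∀ e, sign (x - i e) = sign (y - j e) := by
  wlog hpos : 0 < f.derivative.eval₂ i x generalizing f
  · have hneg := (not_lt.mp hpos).lt_of_ne hne
    obtain ⟨y, hy⟩ := this (f := -f) (by simpa [Left.sign_neg] using hsign) (by simpa) (by simpa)
      (by simpa)
    exact ⟨y, by simpa using hy⟩
  have hpos_j : ∀ y ∈ Ioo (j b) (j c), 0 < f.derivative.eval₂ j y := fun y hy ↦
    sign_eq_one_iff.mp ((hsign x hx y hy).symm.trans (sign_pos hpos))
  have hpos_i : ∀ x' ∈ Ioo (i b) (i c), 0 < f.derivative.eval₂ i x' := fun x' hx' ↦ by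
    obtain ⟨y, hy⟩ := exists_between (hij.lt_iff_lt.mp (hx.1.trans hx.2))
    exact sign_eq_one_iff.mp ((hsign x' hx' y hy).trans (sign_pos (hpos_j y hy)))
  exact hij.exists_root_same_cut_of_derivative_pos hpos_i hpos_j hx hfx

theorem SignAgree.exists_root_same_cut (hij : SignAgree i j) {f : E[X]} (hf : f.derivative ≠ 0)
    (hi : RootsMemRange i f.derivative) (hj : RootsMemRange j f.derivative) {x : R}
    (hfx : f.eval₂ i x = 0) (hx : x ∉ i.range) :
    ∃ y, f.eval₂ j y = 0 ∧ ∀ e, sign (x - i e) = sign (y - j e) := by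
  classical
  have hf0 : f ≠ 0 := by
    rintro rfl
    simp at hf
  obtain ⟨M, hM⟩ := exists_forall_root_abs_lt i hf0
  obtain ⟨b, c, hb, hc, hroots⟩ :=
    exists_isolating_interval (hM x hfx) hx f.derivative.roots.toFinset
  refine hij.exists_root_same_cut_of_sign_derivative_eq (fun x' hx' y hy ↦ ?_) ⟨hb, hc⟩
    (fun h ↦ hx (hi x h)) hfx
  exact hij.sign_eval₂_eq hf hi hj fun e he ↦
    hij.sign_sub_eq_of_mem_Ioo (hroots e (Multiset.mem_toFinset.mpr he)) hx' hy

theorem SignAgree.eval₂RingHom_of_same_cut (hij : SignAgree i j) {f : E[X]} (hf : f.natDegree ≠ 0)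
    (hlow : ∀ g : E[X], g ≠ 0 → g.natDegree < f.natDegree → RootsMemRange i g ∧ RootsMemRange j g)
    {x : R} {y : S} (hfx : f.eval₂ i x = 0) (hfy : f.eval₂ j y = 0)
    (hcut : ∀ e, sign (x - i e) = sign (y - j e)) :
    SignAgree (Polynomial.eval₂RingHom i x) (Polynomial.eval₂RingHom j y) := by
  intro g
  have hmod : f * (g / f) + g % f = g := EuclideanDomain.div_add_mod g f
  have hx : g.eval₂ i x = (g % f).eval₂ i x := by
    conv_lhs => rw [← hmod, Polynomial.eval₂_add, Polynomial.eval₂_mul, hfx, zero_mul, zero_add]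
  have hy : g.eval₂ j y = (g % f).eval₂ j y := by
    conv_lhs => rw [← hmod, Polynomial.eval₂_add, Polynomial.eval₂_mul, hfy, zero_mul, zero_add]
  rw [Polynomial.coe_eval₂RingHom, Polynomial.coe_eval₂RingHom, hx, hy]
  rcases eq_or_ne (g % f) 0 with h0 | h0
  · simp [h0]
  · have ⟨hi, hj⟩ := hlow _ h0 (Polynomial.natDegree_mod_lt g hf)
    exact hij.sign_eval₂_eq h0 hi hj fun e _ ↦ hcut e

theorem SignAgree.exists_eval₂RingHom_of_root (hij : SignAgree i j) {f : E[X]} (hf : f ≠ 0)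
    (hlow : ∀ g : E[X], g ≠ 0 → g.natDegree < f.natDegree → RootsMemRange i g ∧ RootsMemRange j g)
    {x : R} (hfx : f.eval₂ i x = 0) (hx : x ∉ i.range) :
    ∃ y, SignAgree (Polynomial.eval₂RingHom i x) (Polynomial.eval₂RingHom j y) := by
  have hdeg : f.natDegree ≠ 0 := fun h ↦ by
    rw [Polynomial.eq_C_of_natDegree_eq_zero h] at hfx hf
    simp_all
  have : CharZero E := i.charZero
  have hderiv : f.derivative ≠ 0 := mt Polynomial.derivative_eq_zero.mp hdeg
  have ⟨hi, hj⟩ := hlow _ hderiv (Polynomial.natDegree_derivative_lt hdeg)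
  obtain ⟨y, hfy, hcut⟩ := hij.exists_root_same_cut hderiv hi hj hfx hx
  exact ⟨y, hij.eval₂RingHom_of_same_cut hdeg hlow hfx hfy hcut⟩

end AlgebraicStep

theorem sign_div_eq_sign_mul {K : Type*} [Field K] [LinearOrder K] [IsStrictOrderedRing K]
    (a b : K) : sign (a / b) = sign (a * b) := by
  rcases eq_or_ne b 0 with rfl | hb
  · simp
  · have hab : a / b * b ^ 2 = a * b := by field_simp
    rw [← hab, sign_mul _ (b ^ 2), sign_pos (by positivity : 0 < b ^ 2), mul_one]

section MaximalExtension

variable {R : Type u} {S : Type v} [Field R] [LinearOrder R] [Field S] [LinearOrder S]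

/-- The elements of `G` have components of equal sign, so that `G` is the graph of an isomorphism
of ordered rings between a subring of `R` and a subring of `S`. -/
def IsCommonSubring (G : Subring (R × S)) : Prop :=
  SignAgree ((RingHom.fst R S).comp G.subtype) ((RingHom.snd R S).comp G.subtype)

theorem SignAgree.isCommonSubring_range {E : Type*} [CommRing E] {i : E →+* R} {j : E →+* S}
    (hij : SignAgree i j) : IsCommonSubring (i.prod j).range := by
  rintro ⟨_, e, rfl⟩
  exact hij e

theorem IsCommonSubring.exists_le_maximal {G : Subring (R × S)} (hG : IsCommonSubring G) :
    ∃ G', G ≤ G' ∧ Maximal IsCommonSubring G' := by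
  refine zorn_le_nonempty₀ {G | IsCommonSubring G} (fun c hc hchain G₁ hG₁ ↦ ?_) G hG
  refine ⟨sSup c, ?_, fun _ ↦ le_sSup⟩
  rintro ⟨z, hz⟩
  obtain ⟨G₂, hG₂, hz⟩ := (Subring.mem_sSup_of_directedOn ⟨G₁, hG₁⟩ hchain.directedOn).mp hz
  exact hc hG₂ ⟨z, hz⟩

theorem IsCommonSubring.injective_fst {G : Subring (R × S)} (hG : IsCommonSubring G) :
    Function.Injective ((RingHom.fst R S).comp G.subtype) := by
  refine (injective_iff_map_eq_zero _).mpr fun z hz ↦ ?_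
  exact Subtype.ext (Prod.ext hz ((hG.apply_eq_zero_iff z).mp hz))

theorem IsCommonSubring.injective_snd {G : Subring (R × S)} (hG : IsCommonSubring G) :
    Function.Injective ((RingHom.snd R S).comp G.subtype) := by
  refine (injective_iff_map_eq_zero _).mpr fun z hz ↦ ?_
  exact Subtype.ext (Prod.ext ((hG.apply_eq_zero_iff z).mpr hz) hz)

variable [IsStrictOrderedRing R] [IsStrictOrderedRing S]

theorem SignAgree.fractionRing_lift {E : Type*} [CommRing E] [IsDomain E] {i : E →+* R}
    {j : E →+* S} (hij : SignAgree i j) (hi : Function.Injective i) (hj : Function.Injective j) :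
    SignAgree (IsFractionRing.lift hi : FractionRing E →+* R)
      (IsFractionRing.lift hj : FractionRing E →+* S) := by
  intro e
  obtain ⟨a, b, -, rfl⟩ := IsFractionRing.div_surjective (A := E) e
  simp only [map_div₀, IsFractionRing.lift_algebraMap, sign_div_eq_sign_mul, ← map_mul, hij (a * b)]

/-- The pair `i, j` cannot be extended, as a pair of homomorphisms agreeing in sign, by a single
element. -/
def SignAgree.IsMaximal {E : Type*} [CommRing E] (i : E →+* R) (j : E →+* S) : Prop :=
  ∀ x y, SignAgree (Polynomial.eval₂RingHom i x) (Polynomial.eval₂RingHom j y) →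
    x ∈ i.range ∧ y ∈ j.range

theorem SignAgree.exists_isMaximal {E : Type*} [CommRing E] {i : E →+* R} {j : E →+* S}
    (hij : SignAgree i j) :
    ∃ (F : Type (max u v)) (_ : Field F) (k : E →+* F) (i' : F →+* R) (j' : F →+* S),
      i'.comp k = i ∧ j'.comp k = j ∧ SignAgree i' j' ∧ SignAgree.IsMaximal i' j' := by
  obtain ⟨G, hle, hG⟩ := hij.isCommonSubring_range.exists_le_maximal
  have hi := hG.prop.injective_fst
  have hj := hG.prop.injective_snd
  have : IsDomain G := hi.isDomain _
  let k : E →+* G := (i.prod j).codRestrict G fun e ↦ hle ⟨e, rfl⟩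
  let i' : FractionRing G →+* R := IsFractionRing.lift hi
  let j' : FractionRing G →+* S := IsFractionRing.lift hj
  have hi' (g : G) : i' (algebraMap G _ g) = g.1.1 := IsFractionRing.lift_algebraMap hi g
  have hj' (g : G) : j' (algebraMap G _ g) = g.1.2 := IsFractionRing.lift_algebraMap hj g
  refine ⟨FractionRing G, inferInstance, (algebraMap G _).comp k, i', j',
    RingHom.ext fun e ↦ hi' (k e), RingHom.ext fun e ↦ hj' (k e), hG.prop.fractionRing_lift hi hj,
    fun x y hxy ↦ ?_⟩
  have hle' : G ≤ ((Polynomial.eval₂RingHom i' x).prod (Polynomial.eval₂RingHom j' y)).range :=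
    fun g hg ↦ ⟨Polynomial.C (algebraMap G _ ⟨g, hg⟩), by simp [hi', hj']⟩
  have hmem : (x, y) ∈ G := hG.le_of_ge hxy.isCommonSubring_range hle' ⟨Polynomial.X, by simp⟩
  exact ⟨⟨_, hi' ⟨_, hmem⟩⟩, ⟨_, hj' ⟨_, hmem⟩⟩⟩

theorem SignAgree.IsMaximal.rootsMemRange [PolynomialIVP R] [PolynomialIVP S] {E : Type*} [Field E]
    {i : E →+* R} {j : E →+* S} (hij : SignAgree i j) (hmax : SignAgree.IsMaximal i j) {f : E[X]}
    (hf : f ≠ 0) : RootsMemRange i f ∧ RootsMemRange j f := by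
  induction hn : f.natDegree using Nat.strong_induction_on generalizing f with
  | _ n ih =>
    have hlow (g : E[X]) (hg : g ≠ 0) (hgf : g.natDegree < f.natDegree) :
        RootsMemRange i g ∧ RootsMemRange j g := ih _ (hn ▸ hgf) hg rfl
    refine ⟨fun x hx ↦ ?_, fun y hy ↦ ?_⟩ <;> by_contra hnot
    · obtain ⟨y, hxy⟩ := hij.exists_eval₂RingHom_of_root hf hlow hx hnot
      exact hnot (hmax x y hxy).1
    · obtain ⟨x, hyx⟩ := hij.symm.exists_eval₂RingHom_of_root hf
        (fun g hg hgf ↦ (hlow g hg hgf).symm) hy hnot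
      exact hnot (hmax x y hyx.symm).2

end MaximalExtension

section OneVariable

variable {R S : Type*} [Field R] [LinearOrder R] [IsStrictOrderedRing R]
  [Field S] [LinearOrder S] [IsStrictOrderedRing S] {E : Type*} [CommRing E] {i : E →+* R}
  {j : E →+* S}

theorem SignAgree.exists_same_cut_on_finset (hij : SignAgree i j) (U : Finset E) (x : R) :
    ∃ y, ∀ e ∈ U, sign (x - i e) = sign (y - j e) := by
  classical
  by_cases hx : ∃ e, i e = x
  · obtain ⟨e, rfl⟩ := hx
    exact ⟨j e, fun e' _ ↦ by rw [← map_sub, ← map_sub, hij]⟩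
  obtain ⟨y, hlo, hhi⟩ := Order.exists_between_finsets ((U.filter (i · < x)).image j)
    ((U.filter (x < i ·)).image j) (by
      simp only [Finset.forall_mem_image, Finset.mem_filter]
      exact fun a ha b hb ↦ hij.lt_iff_lt.mp (ha.2.trans hb.2))
  simp only [Finset.forall_mem_image, Finset.mem_filter] at hlo hhi
  refine ⟨y, fun e he ↦ ?_⟩
  rcases lt_trichotomy (i e) x with h | h | h
  · rw [sign_pos (sub_pos.mpr h), sign_pos (sub_pos.mpr (hlo ⟨he, h⟩))]
  · exact absurd ⟨e, h⟩ hx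
  · rw [sign_neg (sub_neg.mpr h), sign_neg (sub_neg.mpr (hhi ⟨he, h⟩))]

theorem SignAgree.exists_forall_sign_eval₂_eq [PolynomialIVP R] [PolynomialIVP S]
    (hij : SignAgree i j) (T : Finset E[X]) (x : R) :
    ∃ y, ∀ f ∈ T, sign (f.eval₂ i x) = sign (f.eval₂ j y) := by
  classical
  obtain ⟨F, _, k, i', j', rfl, rfl, hij', hmax⟩ := hij.exists_isMaximal
  obtain ⟨y, hy⟩ := hij'.exists_same_cut_on_finset (T.biUnion fun f ↦ (f.map k).roots.toFinset) x
  refine ⟨y, fun f hf ↦ ?_⟩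
  rw [← Polynomial.eval₂_map, ← Polynomial.eval₂_map]
  rcases eq_or_ne (f.map k) 0 with h0 | h0
  · simp [h0]
  have ⟨hi, hj⟩ := hmax.rootsMemRange hij' h0
  exact hij'.sign_eval₂_eq h0 hi hj fun e he ↦
    hy e (Finset.mem_biUnion.mpr ⟨f, hf, Multiset.mem_toFinset.mpr he⟩)

end OneVariable

section Ultrapower

variable {ι : Type*} (U : Ultrafilter ι) {S : Type*} [Field S]

/-- The homomorphism to the ultrapower of `S` induced by a homomorphism to `S`. -/
def ultrapowerHom {E : Type*} [CommRing E] (j : E →+* S) : E →+* Germ (U : Filter ι) S :=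
  (Germ.coeRingHom (U : Filter ι)).comp (RingHom.pi fun _ ↦ j)

theorem eval₂_ultrapowerHom {E : Type*} [CommRing E] (j : E →+* S) (y : ι → S) (f : E[X]) :
    f.eval₂ (ultrapowerHom U j) (y : Germ (U : Filter ι) S) =
      ((fun a ↦ f.eval₂ j (y a) : ι → S) : Germ (U : Filter ι) S) := by
  have h := f.hom_eval₂ (RingHom.pi fun _ ↦ j) (Germ.coeRingHom (U : Filter ι)) y
  rw [ultrapowerHom]
  refine h.symm.trans (congrArg _ (funext fun a ↦ ?_))
  exact f.hom_eval₂ (RingHom.pi fun _ ↦ j) (Pi.evalRingHom _ a) y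

theorem mvPolynomial_eval₂_ultrapowerHom {E : Type*} [CommRing E] (j : E →+* S) {σ : Type*}
    (y : σ → ι → S) (p : MvPolynomial σ E) :
    p.eval₂ (ultrapowerHom U j) (fun s ↦ (y s : Germ (U : Filter ι) S)) =
      ((fun a ↦ p.eval₂ j fun s ↦ y s a : ι → S) : Germ (U : Filter ι) S) := by
  have h := MvPolynomial.eval₂_comp_left (Germ.coeRingHom (U : Filter ι)) (RingHom.pi fun _ ↦ j) y p
  refine h.symm.trans (congrArg _ (funext fun a ↦ ?_))
  exact MvPolynomial.eval₂_comp_left (Pi.evalRingHom _ a) (RingHom.pi fun _ ↦ j) y p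

theorem exists_eval_germ_eq (f : (Germ (U : Filter ι) S)[X]) :
    ∃ F : ι → S[X], ∀ x : ι → S, f.eval (x : Germ (U : Filter ι) S) =
      ((fun a ↦ (F a).eval (x a) : ι → S) : Germ (U : Filter ι) S) := by
  obtain ⟨F, rfl⟩ := Polynomial.map_surjective (Germ.coeRingHom (U : Filter ι))
    (fun z ↦ Germ.inductionOn z fun x ↦ ⟨x, rfl⟩) f
  refine ⟨fun a ↦ F.map (Pi.evalRingHom _ a), fun x ↦ ?_⟩
  refine (Polynomial.eval_map_apply (Germ.coeRingHom (U : Filter ι)) x).trans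
    (congrArg _ (funext fun a ↦ ?_))
  exact (Polynomial.eval_map_apply (Pi.evalRingHom _ a) x).symm

variable [LinearOrder S]

theorem sign_germ_eq_iff (x : ι → S) (s : SignType) :
    sign (x : Germ (U : Filter ι) S) = s ↔ ∀ᶠ a in U, sign (x a) = s := by
  cases s
  · simp only [SignType.zero_eq_zero, sign_eq_zero_iff]
    exact Germ.coe_eq
  · simp only [SignType.neg_eq_neg_one, sign_eq_neg_one_iff]
    exact Germ.coe_lt
  · simp only [SignType.pos_eq_one, sign_eq_one_iff]
    exact Germ.coe_lt

instance [PolynomialIVP S] : PolynomialIVP (Germ (U : Filter ι) S) where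
  exists_isRoot {f a b} hab hf := by
    induction a using Germ.inductionOn with | _ a
    induction b using Germ.inductionOn with | _ b
    obtain ⟨F, hF⟩ := exists_eval_germ_eq U f
    rw [hF, hF] at hf
    have hab' : ∀ᶠ t in U, a t < b t := Germ.coe_lt.mp hab
    have hf' : ∀ᶠ t in U, (F t).eval (a t) * (F t).eval (b t) < 0 := Germ.coe_lt.mp hf
    obtain ⟨c, hc⟩ : ∃ c : ι → S, ∀ᶠ t in U, c t ∈ Ioo (a t) (b t) ∧ (F t).IsRoot (c t) :=
      Eventually.choice <| (hab'.and hf').mono fun t ht ↦ PolynomialIVP.exists_isRoot ht.1 ht.2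
    refine ⟨c, ⟨Germ.coe_lt.mpr (hc.mono fun t ht ↦ ht.1.1),
      Germ.coe_lt.mpr (hc.mono fun t ht ↦ ht.1.2)⟩, ?_⟩
    rw [Polynomial.IsRoot, hF]
    exact Germ.coe_eq.mpr (hc.mono fun t ht ↦ ht.2)

end Ultrapower

section Transfer

theorem SignAgree.exists_eval₂RingHom_ultrapowerHom {R S : Type*} [Field R] [LinearOrder R]
    [IsStrictOrderedRing R] [PolynomialIVP R] [Field S] [LinearOrder S] [IsStrictOrderedRing S]
    [PolynomialIVP S] {E : Type*} [CommRing E] {i : E →+* R} {j : E →+* S} (hij : SignAgree i j)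
    (x : R) :
    ∃ (U : Ultrafilter (Finset E[X])) (y : Germ (U : Filter (Finset E[X])) S),
      SignAgree (Polynomial.eval₂RingHom i x)
        (Polynomial.eval₂RingHom (ultrapowerHom U j) y) := by
  choose y hy using fun T ↦ hij.exists_forall_sign_eval₂_eq T x
  refine ⟨.of atTop, y, fun f ↦ ?_⟩
  have hf : ∀ᶠ T in ((Ultrafilter.of atTop : Ultrafilter (Finset E[X])) : Filter (Finset E[X])),
      f ∈ T :=
    Ultrafilter.of_le _ ((eventually_ge_atTop {f}).mono fun T hT ↦ by simpa using hT)
  rw [Polynomial.coe_eval₂RingHom, Polynomial.coe_eval₂RingHom, eval₂_ultrapowerHom, eq_comm,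
    sign_germ_eq_iff]
  exact hf.mono fun T hT ↦ (hy T f hT).symm

theorem eval₂_optionEquivRight {E R σ : Type*} [CommRing E] [CommRing R] (i : E →+* R)
    (x : Option σ → R) (p : MvPolynomial (Option σ) E) :
    (optionEquivRight E σ p).eval₂ (Polynomial.eval₂RingHom i (x none)) (fun s ↦ x (some s)) =
      p.eval₂ i x := by
  induction p using MvPolynomial.induction_on with
  | C e => simp
  | add p q hp hq => simp only [map_add, eval₂_add, hp, hq]
  | mul_X p s hp =>
    rw [map_mul, eval₂_mul, hp, eval₂_mul, eval₂_X]
    cases s with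
    | none =>
      rw [optionEquivRight_X_none, eval₂_C, Polynomial.coe_eval₂RingHom, Polynomial.eval₂_X]
    | some s => rw [optionEquivRight_X_some, eval₂_X]

theorem SignAgree.exists_forall_sign_mvPolynomial_eval₂_eq {R : Type*} [Field R] [LinearOrder R]
    [IsStrictOrderedRing R] [PolynomialIVP R] {E S : Type u} [CommRing E] [Field S] [LinearOrder S]
    [IsStrictOrderedRing S] [PolynomialIVP S] {i : E →+* R} {j : E →+* S} (hij : SignAgree i j)
    {σ : Type*} [Finite σ] (T : Finset (MvPolynomial σ E)) (x : σ → R) :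
    ∃ y : σ → S, ∀ p ∈ T, sign (p.eval₂ i x) = sign (p.eval₂ j y) := by
  classical
  induction σ using Finite.induction_empty_option generalizing E S with
  | of_equiv e ih =>
    obtain ⟨y, hy⟩ := ih hij (T.image (rename e.symm)) (x ∘ e)
    refine ⟨y ∘ e.symm, fun p hp ↦ ?_⟩
    simpa [eval₂_rename, Function.comp_assoc] using hy _ (Finset.mem_image_of_mem _ hp)
  | h_empty =>
    refine ⟨isEmptyElim, fun p _ ↦ ?_⟩
    rw [eq_C_of_isEmpty p, eval₂_C, eval₂_C, hij]
  | h_option ih =>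
    obtain ⟨U, z, hz⟩ := hij.exists_eval₂RingHom_ultrapowerHom (x none)
    obtain ⟨y, hy⟩ := ih hz (T.image (optionEquivRight E _)) fun s ↦ x (some s)
    have coe_surjective (z : Germ (U : Filter (Finset E[X])) S) :
        ∃ v : Finset E[X] → S, (v : Germ (U : Filter (Finset E[X])) S) = z := by
      induction z using Germ.inductionOn with | _ v
      exact ⟨v, rfl⟩
    have hw := fun s : Option _ ↦ coe_surjective (s.elim z y)
    choose w hw using hw
    have hT : ∀ p ∈ T, ∀ᶠ a in U, sign (p.eval₂ j fun s ↦ w s a) = sign (p.eval₂ i x) := by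
      intro p hp
      rw [← sign_germ_eq_iff, ← mvPolynomial_eval₂_ultrapowerHom, ← eval₂_optionEquivRight,
        ← eval₂_optionEquivRight]
      simp only [hw, Option.elim]
      exact (hy _ (Finset.mem_image_of_mem _ hp)).symm
    obtain ⟨a, ha⟩ := ((eventually_all_finset T).mpr hT).exists
    exact ⟨fun s ↦ w s a, fun p hp ↦ (ha p hp).symm⟩

end Transfer

section SumSq

theorem isSumSq_map {A B : Type*} [Semiring A] [Semiring B] (φ : A →+* B) {s : A}
    (hs : IsSumSq s) : IsSumSq (φ s) := by
  induction hs with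
  | zero => exact map_zero φ ▸ .zero
  | sq_add a _ ih => exact map_add φ _ _ ▸ map_mul φ a a ▸ .sq_add _ ih

theorem exists_isSumSq_map_eq {A B : Type*} [Semiring A] [Semiring B] {φ : A →+* B}
    (hφ : Function.Surjective φ) {t : B} (ht : IsSumSq t) : ∃ s, IsSumSq s ∧ φ s = t := by
  induction ht with
  | zero => exact ⟨0, .zero, map_zero φ⟩
  | sq_add b _ ih =>
    obtain ⟨s, hs, rfl⟩ := ih
    obtain ⟨a, rfl⟩ := hφ b
    exact ⟨a * a + s, .sq_add a hs, by rw [map_add, map_mul]⟩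

theorem isFormallyReal_of_isSemireal (K : Type*) [Field K] [IsSemireal K] : IsFormallyReal K := by
  refine .of_eq_zero_of_eq_zero_of_mul_self_add fun {s a} hs h ↦ ?_
  by_contra ha
  have h' : 1 + s * (a⁻¹ * a⁻¹) = 0 := by
    field_simp
    linear_combination h
  exact IsSemireal.one_add_ne_zero (hs.mul (.mul_self _)) h'

end SumSq

section Descent

theorem exists_isSumSq_natDegree_le {F : Type*} [Field F] {f : F[X]} (hf : f.natDegree ≠ 0)
    {s : F[X]} (hs : IsSumSq s) :
    ∃ t, IsSumSq t ∧ f ∣ s - t ∧ t.natDegree ≤ 2 * (f.natDegree - 1) := by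
  induction hs with
  | zero => exact ⟨0, .zero, by simp, by simp⟩
  | @sq_add g s _ ih =>
    obtain ⟨t, ht, hdvd, hdeg⟩ := ih
    refine ⟨g % f * (g % f) + t, .sq_add _ ht, ?_, Polynomial.natDegree_add_le_of_degree_le ?_ hdeg⟩
    · have hg : f ∣ g - g % f :=
        ⟨g / f, sub_eq_of_eq_add (EuclideanDomain.div_add_mod g f).symm⟩
      convert (hg.mul_right (g + g % f)).add hdvd using 1
      ring
    · refine Polynomial.natDegree_mul_le.trans ?_
      have := Polynomial.natDegree_mod_lt g hf
      omega

variable {F : Type*} [Field F] [LinearOrder F] [IsStrictOrderedRing F]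

-- Infinite descent: after reducing the squares modulo `f`, the cofactor of `f` in `1 + s` has
-- smaller degree than `f`, and it changes sign too because `1 + s` is positive at `a` and `b`.
theorem not_dvd_one_add_of_eval_mul_eval_neg {f : F[X]} {a b : F}
    (hab : f.eval a * f.eval b < 0) {s : F[X]} (hs : IsSumSq s) : ¬ f ∣ 1 + s := by
  induction hn : f.natDegree using Nat.strong_induction_on generalizing f s with
  | _ n ih =>
    subst hn
    intro hdvd
    have hf : f.natDegree ≠ 0 := by
      intro hf
      obtain ⟨c, rfl⟩ := Polynomial.natDegree_eq_zero.mp hf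
      exact (mul_self_nonneg c).not_gt (by simpa using hab)
    obtain ⟨t, ht, hst, hdeg⟩ := exists_isSumSq_natDegree_le hf hs
    obtain ⟨g, hg⟩ : f ∣ 1 + t := by
      convert hdvd.sub hst using 1
      ring
    have eval_mul_eval_pos (c : F) : 0 < f.eval c * g.eval c := by
      rw [← Polynomial.eval_mul, ← hg, Polynomial.eval_add, Polynomial.eval_one]
      have : 0 ≤ t.eval c := (isSumSq_map (Polynomial.evalRingHom c) ht).nonneg
      positivity
    have hab' : g.eval a * g.eval b < 0 := by
      refine neg_of_mul_pos_right ?_ hab.le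
      linear_combination mul_pos (eval_mul_eval_pos a) (eval_mul_eval_pos b)
    have hf0 : f ≠ 0 := by
      rintro rfl
      simp at hf
    have hg0 : g ≠ 0 := by
      rintro rfl
      simp at hab'
    have hlt : g.natDegree < f.natDegree := by
      have : (f * g).natDegree ≤ 2 * (f.natDegree - 1) := by
        rw [← hg]
        exact Polynomial.natDegree_add_le_of_degree_le (by simp) hdeg
      rw [Polynomial.natDegree_mul hf0 hg0] at this
      omega
    exact ih _ hlt hab' ht rfl ⟨f, by rw [hg, mul_comm]⟩

theorem PolynomialIVP.of_irreducible (h : ∀ (f : F[X]), Irreducible f → ∀ a b,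
    f.eval a * f.eval b < 0 → ∃ c, f.IsRoot c) : PolynomialIVP F where
  exists_isRoot {f a b} hab hf := by
    induction f using WfDvdMonoid.induction_on_irreducible with
    | zero => simp at hf
    | unit u hu =>
      obtain ⟨c, -, rfl⟩ := Polynomial.isUnit_iff.mp hu
      exact ((mul_self_nonneg c).not_gt (by simpa using hf)).elim
    | mul f p _ hp ih =>
      have hcase : p.eval a * p.eval b < 0 ∨ f.eval a * f.eval b < 0 := by
        by_contra! hc
        refine (mul_nonneg hc.1 hc.2).not_gt ?_
        simp only [Polynomial.eval_mul] at hf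
        linear_combination hf
      rcases hcase with hpab | hfab
      · obtain ⟨c, hc⟩ := h p hp a b hpab
        refine ⟨c, ?_, Polynomial.root_mul_right_of_isRoot _ hc⟩
        obtain ⟨q, rfl⟩ := Polynomial.dvd_iff_isRoot.mpr hc
        obtain ⟨u, -, rfl⟩ := Polynomial.isUnit_iff.mp <|
          (hp.isUnit_or_isUnit rfl).resolve_left (Polynomial.not_isUnit_X_sub_C c)
        have hac : (a - c) * (b - c) < 0 := by
          refine neg_of_mul_neg_left ?_ (mul_self_nonneg u)
          simp only [Polynomial.eval_mul, Polynomial.eval_sub, Polynomial.eval_X,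
            Polynomial.eval_C] at hpab
          linear_combination hpab
        rcases mul_neg_iff.mp hac with ⟨_, _⟩ | ⟨_, _⟩ <;> constructor <;> linarith
      · obtain ⟨c, hc, hroot⟩ := ih hfab
        exact ⟨c, hc, Polynomial.root_mul_left_of_isRoot _ hroot⟩

end Descent

section RealClosure

/-- A semireal field without proper algebraic semireal extensions; these fields are exactly the real
closed ones. The extension generated by a root of `f` is semireal if and only if `f` divides no
polynomial `1 + s` with `s` a sum of squares, which avoids mentioning the extension. -/
class IsMaximalSemireal (F : Type*) [Field F] : Prop extends IsSemireal F where
  exists_isRoot {f : F[X]} (hf : Irreducible f) (hs : ∀ s, IsSumSq s → ¬ f ∣ 1 + s) :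
    ∃ c, f.IsRoot c

theorem exists_isSumSq_X_sq_sub_C_dvd {F : Type*} [Field F] (a : F) {s : F[X]} (hs : IsSumSq s) :
    ∃ u v w, IsSumSq u ∧ IsSumSq v ∧ Polynomial.X ^ 2 - Polynomial.C a ∣
      s - (Polynomial.C (u + a * v) + Polynomial.C w * Polynomial.X) := by
  set m : F[X] := Polynomial.X ^ 2 - Polynomial.C a with hm
  induction hs with
  | zero => exact ⟨0, 0, 0, .zero, .zero, by simp⟩
  | sq_add g _ ih =>
    obtain ⟨u, v, w, hu, hv, hdvd⟩ := ih
    have hdeg : m.natDegree = 2 := Polynomial.natDegree_X_pow_sub_C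
    obtain ⟨q, p, hpq⟩ := Polynomial.exists_eq_X_add_C_of_natDegree_le_one (p := g % m)
      (Nat.le_of_lt_succ ((Polynomial.natDegree_mod_lt g (by omega)).trans_eq hdeg))
    have hg : m ∣ g - (Polynomial.C q * Polynomial.X + Polynomial.C p) :=
      ⟨g / m, sub_eq_of_eq_add (hpq ▸ (EuclideanDomain.div_add_mod g _).symm)⟩
    refine ⟨p * p + u, q * q + v, 2 * p * q + w, .sq_add p hu, .sq_add q hv, ?_⟩
    convert ((hg.mul_right (g + (Polynomial.C q * Polynomial.X + Polynomial.C p))).add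
      (dvd_mul_left m (Polynomial.C q * Polynomial.C q))).add hdvd using 1
    simp only [hm, map_add, map_mul, map_ofNat]
    ring

theorem isSumSq_neg_of_not_isSquare {F : Type*} [Field F] [IsMaximalSemireal F] {a : F}
    (ha : ¬ IsSquare a) : IsSumSq (-a) := by
  have hsq (b : F) : b ^ 2 ≠ a := fun h ↦ ha ⟨b, by rw [← h, sq]⟩
  have hirr : Irreducible (Polynomial.X ^ 2 - Polynomial.C a) :=
    X_pow_sub_C_irreducible_of_prime Nat.prime_two hsq
  obtain ⟨s, hs, hdvd⟩ : ∃ s, IsSumSq s ∧ Polynomial.X ^ 2 - Polynomial.C a ∣ 1 + s := by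
    by_contra! h
    obtain ⟨b, hb⟩ := IsMaximalSemireal.exists_isRoot hirr h
    exact hsq b (by simpa [sub_eq_zero] using hb)
  obtain ⟨u, v, w, hu, hv, hsuv⟩ := exists_isSumSq_X_sq_sub_C_dvd a hs
  have hlin : Polynomial.C w * Polynomial.X + Polynomial.C (1 + (u + a * v)) = 0 := by
    refine Polynomial.eq_zero_of_dvd_of_natDegree_lt (p := Polynomial.X ^ 2 - Polynomial.C a) ?_ ?_
    · convert hdvd.sub hsuv using 1
      simp only [map_add, map_one]
      ring
    · rw [Polynomial.natDegree_X_pow_sub_C]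
      exact Polynomial.natDegree_linear_le.trans_lt one_lt_two
  have huv : 1 + (u + a * v) = 0 := by simpa using congrArg (Polynomial.eval 0) hlin
  have hv0 : v ≠ 0 := by
    rintro rfl
    exact IsSemireal.one_add_ne_zero hu (by simpa using huv)
  have hneg : -a = (1 + u) * v * (v⁻¹ * v⁻¹) := by
    field_simp
    linear_combination -huv
  exact hneg ▸ ((IsSumSq.one.add hu).mul hv).mul (.mul_self _)

theorem exists_linearOrder_isStrictOrderedRing (F : Type*) [Field F] [IsMaximalSemireal F] :
    ∃ _ : LinearOrder F, IsStrictOrderedRing F := by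
  classical
  have := isFormallyReal_of_isSemireal F
  let P : RingCone F :=
    { Subsemiring.sumSq F with
      eq_zero_of_mem_of_neg_mem' := fun h₁ h₂ ↦ IsFormallyReal.eq_zero_of_isSumSq_of_neg_isSumSq
        (Subsemiring.mem_sumSq.mp h₁) (Subsemiring.mem_sumSq.mp h₂) }
  have hP (a : F) : a ∈ P ↔ IsSumSq a := Subsemiring.mem_sumSq
  have : HasMemOrNegMem P := ⟨fun a ↦ by
    rw [hP, hP]
    exact (em (IsSquare a)).imp IsSquare.isSumSq isSumSq_neg_of_not_isSquare⟩
  let _ : LinearOrder F := .mkOfAddGroupCone P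
  have : IsOrderedRing F := .mkOfCone P
  exact ⟨inferInstance, IsOrderedRing.toIsStrictOrderedRing F⟩

instance (F : Type*) [Field F] [IsMaximalSemireal F] [LinearOrder F] [IsStrictOrderedRing F] :
    PolynomialIVP F :=
  .of_irreducible fun _ hf _ _ hab ↦ IsMaximalSemireal.exists_isRoot hf
    fun _ ↦ not_dvd_one_add_of_eval_mul_eval_neg hab

theorem exists_isSumSq_coe_eq_of_sSup {W : Type*} [Field W] {c : Set (Subfield W)}
    (hne : c.Nonempty) (hc : DirectedOn (· ≤ ·) c) {x : ↥(sSup c)} (hx : IsSumSq x) :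
    ∃ F ∈ c, ∃ y : F, IsSumSq y ∧ (y : W) = x := by
  induction hx with
  | zero =>
    obtain ⟨F, hF⟩ := hne
    exact ⟨F, hF, 0, .zero, rfl⟩
  | sq_add a _ ih =>
    obtain ⟨F₁, hF₁, y, hy, hys⟩ := ih
    obtain ⟨F₂, hF₂, ha⟩ := (Subfield.mem_sSup_of_directedOn hne hc).mp a.2
    obtain ⟨F, hF, h₁, h₂⟩ := hc F₁ hF₁ F₂ hF₂
    exact ⟨F, hF, ⟨a, h₂ ha⟩ * ⟨a, h₂ ha⟩ + Subfield.inclusion h₁ y,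
      .sq_add _ (isSumSq_map _ hy), congrArg ((a : W) * a + ·) hys⟩

theorem exists_maximal_isSemireal_subfield {W : Type*} [Field W] {F₀ : Subfield W}
    (h₀ : IsSemireal F₀) : ∃ F ≥ F₀, Maximal (fun F : Subfield W ↦ IsSemireal F) F := by
  refine zorn_le_nonempty₀ {F : Subfield W | IsSemireal F} (fun c hc hchain F₁ hF₁ ↦ ?_) F₀ h₀
  refine ⟨sSup c, .of_not_isSumSq_neg_one fun hneg ↦ ?_, fun _ ↦ le_sSup⟩
  obtain ⟨F, hF, y, hy, hy'⟩ := exists_isSumSq_coe_eq_of_sSup ⟨F₁, hF₁⟩ hchain.directedOn hneg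
  have : IsSemireal F := hc hF
  obtain rfl : y = -1 := Subtype.ext hy'
  exact IsSemireal.not_isSumSq_neg_one F hy

open scoped IntermediateField in
theorem isSemireal_adjoin_simple {F W : Type*} [Field F] [Field W] [Algebra F W] {f : F[X]}
    (hf : Irreducible f) (hs : ∀ s, IsSumSq s → ¬ f ∣ 1 + s) {α : W}
    (hα : Polynomial.aeval α f = 0) :
    IsSemireal F⟮α⟯ := by
  have halg : IsAlgebraic F α := ⟨f, hf.ne_zero, hα⟩
  let φ : F[X] →ₐ[F] F⟮α⟯ := Polynomial.aeval (IntermediateField.AdjoinSimple.gen F α)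
  have coe_φ (g : F[X]) : (φ g : W) = Polynomial.aeval α g :=
    IntermediateField.AdjoinSimple.coe_aeval_gen_apply ..
  have hφ : Function.Surjective φ := by
    rintro ⟨x, hx⟩
    rw [← IntermediateField.mem_toSubalgebra,
      IntermediateField.adjoin_simple_toSubalgebra_of_isAlgebraic halg,
      Algebra.adjoin_singleton_eq_range_aeval] at hx
    obtain ⟨g, rfl⟩ := hx
    exact ⟨g, Subtype.ext (coe_φ g)⟩
  refine .of_not_isSumSq_neg_one fun hneg ↦ ?_
  obtain ⟨s, hsq, hφs⟩ := exists_isSumSq_map_eq (φ := (φ : F[X] →+* F⟮α⟯)) hφ hneg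
  have hroot : Polynomial.aeval α (1 + s) = 0 := by
    rw [← coe_φ, map_add, map_one]
    exact congrArg Subtype.val (add_eq_zero_iff_eq_neg'.mpr hφs)
  have hfα : f ∣ minpoly F α :=
    (minpoly.irreducible halg.isIntegral).dvd_symm hf (minpoly.dvd F α hα)
  exact hs s hsq (hfα.trans (minpoly.dvd F α hroot))

theorem isMaximalSemireal_of_maximal {W : Type*} [Field W] [IsAlgClosed W] {F : Subfield W}
    (hF : Maximal (fun F : Subfield W ↦ IsSemireal F) F) : IsMaximalSemireal F where
  __ := hF.prop
  exists_isRoot {f} hf hs := by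
    obtain ⟨α, hα⟩ := IsAlgClosed.exists_aeval_eq_zero W f
      (Polynomial.degree_pos_of_irreducible hf).ne'
    let L := IntermediateField.adjoin F {α}
    have hLF : L.toSubfield ≤ F := hF.le_of_ge (isSemireal_adjoin_simple hf hs hα)
      fun x hx ↦ L.algebraMap_mem ⟨x, hx⟩
    have hαF : α ∈ F := hLF (IntermediateField.mem_adjoin_simple_self F α)
    have hroot := Polynomial.aeval_algebraMap_apply W (⟨α, hαF⟩ : F) f
    exact ⟨⟨α, hαF⟩, (map_eq_zero (algebraMap F W)).mp (hroot.symm.trans hα)⟩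

theorem isSemireal_of_ringHom {A B : Type*} [Ring A] [Ring B] [IsSemireal B] (φ : A →+* B) :
    IsSemireal A :=
  .of_not_isSumSq_neg_one fun h ↦ IsSemireal.not_isSumSq_neg_one B <| by
    simpa using isSumSq_map φ h

theorem exists_ringHom_isMaximalSemireal (K : Type*) [Field K] [IsSemireal K] :
    ∃ (F : Subfield (AlgebraicClosure K)) (_ : K →+* F), IsMaximalSemireal F := by
  let e := (algebraMap K (AlgebraicClosure K)).rangeRestrictFieldEquiv
  obtain ⟨F, hle, hF⟩ :=
    exists_maximal_isSemireal_subfield (isSemireal_of_ringHom e.symm.toRingHom)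
  exact ⟨F, (Subfield.inclusion hle).comp e, isMaximalSemireal_of_maximal hF⟩

end RealClosure

section RealIdeal

variable {A : Type*} [CommRing A]

theorem exists_eq_sum_sq_of_isSumSq {t : A} (ht : IsSumSq t) :
    ∃ (k : ℕ) (a : Fin k → A), t = ∑ i, a i ^ 2 := by
  induction ht with
  | zero => exact ⟨0, Fin.elim0, by simp⟩
  | sq_add b _ ih =>
    obtain ⟨k, a, rfl⟩ := ih
    exact ⟨k + 1, Fin.cons b a, by rw [Fin.sum_univ_succ, Fin.cons_zero, sq]; simp⟩

theorem isFormallyReal_quotient {I : Ideal A} (hI : I.IsRealIdeal) : IsFormallyReal (A ⧸ I) := by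
  refine .of_eq_zero_of_eq_zero_of_mul_self_add fun {s b} hs h ↦ ?_
  obtain ⟨t, ht, rfl⟩ := exists_isSumSq_map_eq Ideal.Quotient.mk_surjective hs
  obtain ⟨b, rfl⟩ := Ideal.Quotient.mk_surjective b
  obtain ⟨k, a, rfl⟩ := exists_eq_sum_sq_of_isSumSq ht
  rw [← map_mul, ← map_add, Ideal.Quotient.eq_zero_iff_mem] at h
  exact Ideal.Quotient.eq_zero_iff_mem.mpr <|
    hI (k + 1) (Fin.cons b a) (by simpa [Fin.sum_univ_succ, sq] using h) 0

theorem isRealIdeal_ker {B : Type*} [CommRing B] [IsFormallyReal B] (φ : A →+* B) :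
    (RingHom.ker φ).IsRealIdeal := by
  intro k a ha i
  simp only [RingHom.mem_ker, map_sum, map_pow] at ha ⊢
  rw [← Finset.add_sum_erase _ _ (Finset.mem_univ i)] at ha
  exact eq_zero_of_pow_eq_zero <|
    IsFormallyReal.eq_zero_of_add_right (IsSquare.sq _).isSumSq (IsSumSq.sum_sq _ _) ha

theorem isRealIdeal_colon {I : Ideal A} (hI : I.IsRealIdeal) (b : A) :
    (I.colon {b}).IsRealIdeal := by
  intro k a ha i
  rw [Submodule.mem_colon_singleton, smul_eq_mul] at ha ⊢
  refine hI k (fun i ↦ a i * b) ?_ i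
  convert I.mul_mem_right b ha using 1
  simp only [mul_pow, ← Finset.sum_mul]
  ring

theorem isPrime_of_maximal_isRealIdeal {q : A} {P : Ideal A}
    (hP : Maximal (fun I : Ideal A ↦ I.IsRealIdeal ∧ q ∉ I) P) : P.IsPrime := by
  have mul_mem_of_mul_mem {a b : A} (hab : a * b ∈ P) (ha : a ∉ P) : q * b ∈ P := by
    by_contra hq
    refine ha (hP.le_of_ge ⟨isRealIdeal_colon hP.prop.1 b, ?_⟩ Ideal.le_colon ?_)
    · exact fun h ↦ hq (Submodule.mem_colon_singleton.mp h)
    · exact Submodule.mem_colon_singleton.mpr hab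
  refine Ideal.isPrime_iff.mpr ⟨?_, fun {a b} hab ↦ ?_⟩
  · rintro rfl
    exact hP.prop.2 Submodule.mem_top
  · by_contra! h
    have hbq : b * q ∈ P := mul_comm q b ▸ mul_mem_of_mul_mem hab h.1
    have hqq : q * q ∈ P := mul_mem_of_mul_mem hbq h.2
    exact hP.prop.2 (hP.prop.1 1 (fun _ ↦ q) (by simpa [sq] using hqq) 0)

theorem exists_isPrime_isRealIdeal {I : Ideal A} (hI : I.IsRealIdeal) {q : A} (hq : q ∉ I) :
    ∃ P : Ideal A, P.IsPrime ∧ P.IsRealIdeal ∧ I ≤ P ∧ q ∉ P := by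
  obtain ⟨P, hIP, hP⟩ : ∃ P ≥ I, Maximal (fun J : Ideal A ↦ J.IsRealIdeal ∧ q ∉ J) P := by
    refine zorn_le_nonempty₀ {J : Ideal A | J.IsRealIdeal ∧ q ∉ J} (fun c hc hchain J hJ ↦ ?_) I
      ⟨hI, hq⟩
    have mem_sSup (x : A) : x ∈ sSup c ↔ ∃ J ∈ c, x ∈ J :=
      Submodule.mem_sSup_of_directed ⟨J, hJ⟩ hchain.directedOn
    refine ⟨sSup c, ⟨fun k a ha i ↦ ?_, fun hmem ↦ ?_⟩, fun _ ↦ le_sSup⟩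
    · obtain ⟨J, hJ, ha⟩ := (mem_sSup _).mp ha
      exact (mem_sSup _).mpr ⟨J, hJ, (hc hJ).1 k a ha i⟩
    · obtain ⟨J, hJ, hmem⟩ := (mem_sSup _).mp hmem
      exact (hc hJ).2 hmem
  exact ⟨P, isPrime_of_maximal_isRealIdeal hP, hP.prop.1, hIP, hP.prop.2⟩

theorem exists_isSumSq_mul_sq_eq_algebraMap {B K : Type*} [CommRing B] [IsDomain B] [Field K]
    [Algebra B K] [IsFractionRing B K] {s : K} (hs : IsSumSq s) :
    ∃ t b : B, IsSumSq t ∧ b ≠ 0 ∧ s * algebraMap B K b ^ 2 = algebraMap B K t := by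
  induction hs with
  | zero => exact ⟨0, 1, .zero, one_ne_zero, by simp⟩
  | sq_add x _ ih =>
    obtain ⟨t, b, ht, hb, hs⟩ := ih
    obtain ⟨a, c, hc, rfl⟩ := IsFractionRing.div_surjective (A := B) x
    refine ⟨a * b * (a * b) + t * (c * c), b * c, .sq_add _ (ht.mul (.mul_self c)),
      mul_ne_zero hb (nonZeroDivisors.ne_zero hc), ?_⟩
    have hc' : algebraMap B K c ≠ 0 := IsFractionRing.to_map_ne_zero_of_mem_nonZeroDivisors hc
    simp only [map_add, map_mul, ← hs]
    field_simp

theorem isSemireal_of_isFractionRing (B K : Type*) [CommRing B] [IsDomain B] [IsFormallyReal B]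
    [Field K] [Algebra B K] [IsFractionRing B K] : IsSemireal K := by
  refine .of_not_isSumSq_neg_one fun h ↦ ?_
  obtain ⟨t, b, ht, hb, h⟩ := exists_isSumSq_mul_sq_eq_algebraMap (B := B) h
  have hbt : b * b + t = 0 := by
    apply IsFractionRing.injective B K
    rw [map_add, map_mul, ← h, map_zero]
    ring
  exact hb (mul_self_eq_zero.mp (IsFormallyReal.eq_zero_of_add_right (.mul_self b) ht hbt))

theorem exists_ringHom_ker_eq {A : Type u} [CommRing A] {P : Ideal A} [P.IsPrime]
    (hP : P.IsRealIdeal) :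
    ∃ (F : Type u) (_ : Field F) (_ : LinearOrder F) (_ : IsStrictOrderedRing F)
      (_ : PolynomialIVP F) (φ : A →+* F), RingHom.ker φ = P := by
  have := isFormallyReal_quotient hP
  have := isSemireal_of_isFractionRing (A ⧸ P) (FractionRing (A ⧸ P))
  obtain ⟨F, ψ, _⟩ := exists_ringHom_isMaximalSemireal (FractionRing (A ⧸ P))
  obtain ⟨_, _⟩ := exists_linearOrder_isStrictOrderedRing F
  refine ⟨F, inferInstance, inferInstance, inferInstance, inferInstance,
    (ψ.comp (algebraMap (A ⧸ P) _)).comp (Ideal.Quotient.mk P), ?_⟩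
  have hinj : Function.Injective (ψ.comp (algebraMap (A ⧸ P) _)) :=
    ψ.injective.comp (IsFractionRing.injective (A ⧸ P) (FractionRing (A ⧸ P)))
  rw [RingHom.ker_comp_of_injective _ hinj, Ideal.mk_ker]

end RealIdeal

section Point

variable {K : Type*} [Field K] [LinearOrder K] [IsStrictOrderedRing K] [PolynomialIVP K]

theorem isSquare_of_nonneg {a : K} (ha : 0 ≤ a) : IsSquare a := by
  rcases ha.eq_or_lt with rfl | ha
  · exact .zero
  have hneg : (Polynomial.X ^ 2 - Polynomial.C a).eval 0 *
      (Polynomial.X ^ 2 - Polynomial.C a).eval (a + 1) < 0 := by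
    simp only [Polynomial.eval_sub, Polynomial.eval_pow, Polynomial.eval_X, Polynomial.eval_C]
    nlinarith [sq_nonneg a]
  obtain ⟨c, -, hc⟩ := PolynomialIVP.exists_isRoot (by linarith : 0 < a + 1) hneg
  exact ⟨c, by simpa [sub_eq_zero, sq, eq_comm] using hc⟩

theorem signAgree_id_of_ringHom {F : Type*} [Field F] [LinearOrder F] [IsStrictOrderedRing F]
    (φ : K →+* F) : SignAgree φ (RingHom.id K) := by
  have h {a : K} (ha : 0 < a) : 0 < φ a := by
    obtain ⟨b, rfl⟩ := isSquare_of_nonneg ha.le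
    exact map_mul φ b b ▸ mul_self_pos.mpr ((map_ne_zero φ).mpr (left_ne_zero_of_mul ha.ne'))
  intro a
  rcases lt_trichotomy a 0 with ha | rfl | ha
  · have := h (neg_pos.mpr ha)
    rw [map_neg, neg_pos] at this
    simp [sign_neg ha, sign_neg this]
  · simp
  · simp [sign_pos ha, sign_pos (h ha)]

theorem exists_eval_eq_zero_of_isPrime {σ : Type*} [Finite σ] {P : Ideal (MvPolynomial σ K)}
    [P.IsPrime] (hP : P.IsRealIdeal) {q : MvPolynomial σ K} (hq : q ∉ P) :
    ∃ a : σ → K, (∀ p ∈ P, eval a p = 0) ∧ eval a q ≠ 0 := by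
  classical
  obtain ⟨F, _, _, _, _, φ, hφ⟩ := exists_ringHom_ker_eq hP
  obtain ⟨T, rfl⟩ := (isNoetherianRing_iff_ideal_fg _).mp inferInstance P
  obtain ⟨a, ha⟩ := (signAgree_id_of_ringHom (φ.comp C)).exists_forall_sign_mvPolynomial_eval₂_eq
    (insert q T) fun s ↦ φ (X s)
  have eval_eq_zero_iff {p} (hp : p ∈ insert q T) : eval a p = 0 ↔ p ∈ Ideal.span T := by
    have hφp : p.eval₂ (φ.comp C) (fun s ↦ φ (X s)) = φ p :=
      (map_mvPolynomial_eq_eval₂ φ p).symm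
    rw [← hφ, RingHom.mem_ker, ← hφp, ← sign_eq_zero_iff (a := p.eval₂ _ _), ha p hp,
      sign_eq_zero_iff]
    rfl
  refine ⟨a, fun p hp ↦ ?_, mt (eval_eq_zero_iff (Finset.mem_insert_self q T)).mp hq⟩
  have hle : Ideal.span T ≤ RingHom.ker (eval a) := Ideal.span_le.mpr fun t ht ↦
    (eval_eq_zero_iff (Finset.mem_insert_of_mem ht)).mpr (Ideal.subset_span ht)
  exact hle hp

end Point

end RealNullstellensatz

open RealNullstellensatz in
theorem real_nullstellensatz_general {K : Type*} [Field K] [LinearOrder K] [IsStrictOrderedRing K]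
    [PolynomialIVP K] {σ ι : Type*} [Finite σ] (p : ι → MvPolynomial σ K) (q : MvPolynomial σ K) :
    (∀ a : σ → K, (∀ i, eval a (p i) = 0) → eval a q = 0) ↔
      ∀ I : Ideal (MvPolynomial σ K), I.IsRealIdeal → (∀ i, p i ∈ I) → q ∈ I := by
  refine ⟨fun h I hI hp ↦ ?_, fun h a ha ↦ h _ (isRealIdeal_ker (eval a)) ha⟩
  by_contra hq
  obtain ⟨P, hPprime, hP, hIP, hqP⟩ := exists_isPrime_isRealIdeal hI hq
  obtain ⟨a, haP, haq⟩ := exists_eval_eq_zero_of_isPrime hP hqP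
  exact haq (h a fun i ↦ haP (p i) (hIP (hp i)))

/-- **Real Nullstellensatz (Theorem A).** -/
theorem real_nullstellensatz (d m : ℕ) (p : Fin m → MvPolynomial (Fin d) ℝ)
    (q : MvPolynomial (Fin d) ℝ) :
    (∀ a : Fin d → ℝ, (∀ i, eval a (p i) = 0) → eval a q = 0) ↔
      (∀ I : Ideal (MvPolynomial (Fin d) ℝ),
        I.IsRealIdeal → (∀ i, p i ∈ I) → q ∈ I) := by
  exact real_nullstellensatz_general p q
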